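/- Let n ≥ 1, 1 ≤ ℓ ≤ n, and let g : (−∞, x_{ℓ,2n}] → [0,∞) have 2n continuous derivatives with g^{(k)}(x) ≥ 0 for all 0 ≤ k ≤ 2n and all x < x_{ℓ,2n}. Then ∑_{k=1}^{ℓ−1} λ_{k,2n}^{(1)} g(x_{k,2n}) ≤ ∫_{[a₁, x_{ℓ,2n})} g(x) dμ₁(x), and ∫_{[a₁, x_{ℓ,2n}]} g(x) dμ₁(x) ≤ ∑_{k=1}^{ℓ} λ_{k,2n}^{(1)} g(x_{k,2n}). -/

import Mathlib

open MeasureTheory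

/-- The data of the diagonal type II multiple orthogonal polynomial for an
Angelesco system with two intervals: its `2n` zeros, listed in increasing
order, with `n` of them in `(a₁,b₁)` and `n` of them in `(a₂,b₂)`, and the
multiple orthogonality conditions. -/
structure Angelesco (μ₁ μ₂ : Measure ℝ) (a₁ b₁ a₂ b₂ : ℝ) (n : ℕ) where
  x : Fin (2 * n) → ℝ
  mono : StrictMono x
  mem1 : ∀ i : Fin (2 * n), (i : ℕ) < n → x i ∈ Set.Ioo a₁ b₁
  mem2 : ∀ i : Fin (2 * n), n ≤ (i : ℕ) → x i ∈ Set.Ioo a₂ b₂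
  orth1 : ∀ k < n, ∫ t, (∏ i, (t - x i)) * t ^ k ∂μ₁ = 0
  orth2 : ∀ k < n, ∫ t, (∏ i, (t - x i)) * t ^ k ∂μ₂ = 0

/-- The quadrature weight `λ_{k,2n}^{(μ)} = ∫ ℓ_{k,2n} dμ`, where `ℓ_{k,2n}` is the
`k`-th fundamental Lagrange polynomial for the nodes `x_{1,2n} < ⋯ < x_{2n,2n}`. -/
noncomputable def qweight {μ₁ μ₂ : Measure ℝ} {a₁ b₁ a₂ b₂ : ℝ} {n : ℕ}
    (ad : Angelesco μ₁ μ₂ a₁ b₁ a₂ b₂ n) (μ : Measure ℝ) (k : Fin (2 * n)) : ℝ :=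
  ∫ t, (Lagrange.basis Finset.univ ad.x k).eval t ∂μ

/-!
To bound the integral of a truncation `g · 1_S`, with `S = (-∞, c)` or `S = (-∞, c]` and `c` a
node, divide `g` by `∏ (r - t)` over the nodes `r` to the right of `S`. The quotient still has
nonnegative divided differences on `S`, so the Newton coefficients of its Hermite interpolant at the
nodes in `S` are nonnegative. Multiplied back by `∏ (r - t)`, the interpolant agrees with `g · 1_S`
at every node. Count every node twice, except `c` and the nodes beyond the support of the measure:
then the result lies below `g · 1_S` on the support if `c ∉ S` and above it if `c ∈ S`, and its
degree is small enough for the quadrature rule to be exact.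
-/

section Polynomials

open Polynomial

variable {K : Type*} [CommRing K]

theorem eval_multiset_prod_C_sub_X (R : Multiset K) (t : K) :
    (R.map (C · - X)).prod.eval t = (R.map (· - t)).prod := by
  simp [eval_multiset_prod, Multiset.map_map]

theorem degree_multiset_prod_C_sub_X [IsDomain K] (R : Multiset K) :
    (R.map (C · - X)).prod.degree = (R.card : WithBot ℕ) := by
  have hlinear (r : K) : (C r - X).degree = 1 := by rw [← neg_sub, degree_neg, degree_X_sub_C]
  simp [degree_multiset_prod, Multiset.map_map, hlinear]

end Polynomials

section DividedDifferences

open Polynomial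

variable {𝕜 : Type*} [Field 𝕜] [LinearOrder 𝕜]

/-- `f` has nonnegative divided differences of orders `0, …, N` on `S`; for `C^N` functions on an
interval this says that the derivatives of orders `0, …, N` are nonnegative. The divided difference
`t ↦ f[x, t]` is left free at `t = x`, so that no derivative occurs and repeated base points are
allowed. -/
def HasNonnegDivDiffOn (S : Set 𝕜) : ℕ → (𝕜 → 𝕜) → Prop
  | 0, f => ∀ t ∈ S, 0 ≤ f t
  | N + 1, f => (∀ t ∈ S, 0 ≤ f t) ∧
      ∀ x ∈ S, ∃ f₁, HasNonnegDivDiffOn S N f₁ ∧ ∀ t ∈ S, f t - f x = (t - x) * f₁ t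

namespace HasNonnegDivDiffOn

variable {S T : Set 𝕜} {N : ℕ} {f g : 𝕜 → 𝕜}

theorem nonneg (hf : HasNonnegDivDiffOn S N f) : ∀ t ∈ S, 0 ≤ f t := by
  cases N with
  | zero => exact hf
  | succ N => exact hf.1

theorem congr (hf : HasNonnegDivDiffOn S N f) (hfg : S.EqOn f g) : HasNonnegDivDiffOn S N g := by
  cases N with
  | zero => exact fun t ht => hfg ht ▸ hf t ht
  | succ N =>
    refine ⟨fun t ht => hfg ht ▸ hf.1 t ht, fun x hx => ?_⟩
    obtain ⟨f₁, hf₁, hslope⟩ := hf.2 x hx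
    exact ⟨f₁, hf₁, fun t ht => by rw [← hfg ht, ← hfg hx, hslope t ht]⟩

theorem mono (hTS : T ⊆ S) (hf : HasNonnegDivDiffOn S N f) : HasNonnegDivDiffOn T N f := by
  induction N generalizing f with
  | zero => exact fun t ht => hf t (hTS ht)
  | succ N ih =>
    refine ⟨fun t ht => hf.1 t (hTS ht), fun x hx => ?_⟩
    obtain ⟨f₁, hf₁, hslope⟩ := hf.2 x (hTS hx)
    exact ⟨f₁, ih hf₁, fun t ht => hslope t (hTS ht)⟩

theorem of_succ (hf : HasNonnegDivDiffOn S (N + 1) f) : HasNonnegDivDiffOn S N f := by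
  induction N generalizing f with
  | zero => exact hf.1
  | succ N ih =>
    refine ⟨hf.1, fun x hx => ?_⟩
    obtain ⟨f₁, hf₁, hslope⟩ := hf.2 x hx
    exact ⟨f₁, ih hf₁, hslope⟩

theorem const {a : 𝕜} (ha : 0 ≤ a) : HasNonnegDivDiffOn S N fun _ => a := by
  induction N generalizing a with
  | zero => exact fun _ _ => ha
  | succ N ih => exact ⟨fun _ _ => ha, fun _ _ => ⟨fun _ => 0, ih le_rfl, by simp⟩⟩

variable [IsStrictOrderedRing 𝕜]

theorem monotoneOn (hf : HasNonnegDivDiffOn S (N + 1) f) : MonotoneOn f S := by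
  intro x hx t ht hxt
  obtain ⟨f₁, hf₁, hslope⟩ := hf.2 x hx
  rw [← sub_nonneg, hslope t ht]
  exact mul_nonneg (sub_nonneg.2 hxt) (hf₁.nonneg t ht)

theorem add (hf : HasNonnegDivDiffOn S N f) (hg : HasNonnegDivDiffOn S N g) :
    HasNonnegDivDiffOn S N fun t => f t + g t := by
  induction N generalizing f g with
  | zero => exact fun t ht => add_nonneg (hf t ht) (hg t ht)
  | succ N ih =>
    refine ⟨fun t ht => add_nonneg (hf.1 t ht) (hg.1 t ht), fun x hx => ?_⟩
    obtain ⟨f₁, hf₁, hfslope⟩ := hf.2 x hx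
    obtain ⟨g₁, hg₁, hgslope⟩ := hg.2 x hx
    exact ⟨_, ih hf₁ hg₁, fun t ht => by linear_combination hfslope t ht + hgslope t ht⟩

theorem mul (hf : HasNonnegDivDiffOn S N f) (hg : HasNonnegDivDiffOn S N g) :
    HasNonnegDivDiffOn S N fun t => f t * g t := by
  induction N generalizing f g with
  | zero => exact fun t ht => mul_nonneg (hf t ht) (hg t ht)
  | succ N ih =>
    refine ⟨fun t ht => mul_nonneg (hf.1 t ht) (hg.1 t ht), fun x hx => ?_⟩
    obtain ⟨f₁, hf₁, hfslope⟩ := hf.2 x hx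
    obtain ⟨g₁, hg₁, hgslope⟩ := hg.2 x hx
    refine ⟨_, (ih hf₁ hg.of_succ).add (ih (const (hf.1 x hx)) hg₁), fun t ht => ?_⟩
    linear_combination g t * hfslope t ht + f x * hgslope t ht

theorem inv_sub {r : 𝕜} (hr : ∀ t ∈ S, t < r) : HasNonnegDivDiffOn S N fun t => (r - t)⁻¹ := by
  have hpos : ∀ t ∈ S, 0 < r - t := fun t ht => sub_pos.2 (hr t ht)
  induction N with
  | zero => exact fun t ht => (inv_pos.2 (hpos t ht)).le
  | succ N ih =>
    refine ⟨ih.nonneg, fun x hx => ?_⟩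
    refine ⟨_, ih.mul (const (inv_pos.2 (hpos x hx)).le), fun t ht => ?_⟩
    have := (hpos x hx).ne'
    have := (hpos t ht).ne'
    field_simp
    ring

theorem inv_prod_sub {R : Multiset 𝕜} (hR : ∀ r ∈ R, ∀ t ∈ S, t < r) :
    HasNonnegDivDiffOn S N fun t => ((R.map (· - t)).prod)⁻¹ := by
  induction R using Multiset.induction with
  | empty => simpa using const zero_le_one
  | cons r R ih =>
    rw [Multiset.forall_mem_cons] at hR
    refine ((inv_sub hR.1).mul (ih hR.2)).congr fun t _ => ?_
    simp only [Multiset.map_cons, Multiset.prod_cons, mul_inv]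

/-- The Newton form of the Hermite interpolant: its coefficients are divided differences of `f`, so
it is nonnegative to the right of all nodes. -/
theorem exists_hermite_interpolant {L : Multiset 𝕜} (hf : HasNonnegDivDiffOn S L.card f)
    (hL : ∀ a ∈ L, a ∈ S) :
    ∃ h : 𝕜[X], h.degree < L.card ∧
      (∀ t ∈ S, ∃ e, 0 ≤ e ∧ f t - h.eval t = (L.map (t - ·)).prod * e) ∧
      ∀ t, (∀ a ∈ L, a ≤ t) → 0 ≤ h.eval t := by
  induction L using Multiset.induction generalizing f with
  | empty => exact ⟨0, by simp, fun t ht => ⟨f t, hf t ht, by simp⟩, by simp⟩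
  | cons x L ih =>
    rw [Multiset.forall_mem_cons] at hL
    rw [Multiset.card_cons] at hf
    obtain ⟨f₁, hf₁, hslope⟩ := hf.2 x hL.1
    obtain ⟨h, hdeg, hrem, hpos⟩ := ih hf₁ hL.2
    refine ⟨C (f x) + (X - C x) * h, ?_, fun t ht => ?_, fun t ht => ?_⟩
    · have hmul : ((X - C x) * h).degree < ((L.card + 1 : ℕ) : WithBot ℕ) := by
        rw [degree_mul, degree_X_sub_C, add_comm, Nat.cast_add_one]
        exact WithBot.add_lt_add_right (by simp) hdeg
      rw [Multiset.card_cons]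
      refine (degree_add_le _ _).trans_lt (max_lt (degree_C_le.trans_lt ?_) hmul)
      exact_mod_cast L.card.succ_pos
    · obtain ⟨e, he, hfe⟩ := hrem t ht
      refine ⟨e, he, ?_⟩
      simp only [eval_add, eval_mul, eval_C, eval_sub, eval_X, Multiset.map_cons,
        Multiset.prod_cons]
      linear_combination hslope t ht + (t - x) * hfe
    · rw [Multiset.forall_mem_cons] at ht
      simp only [eval_add, eval_mul, eval_C, eval_sub, eval_X]
      exact add_nonneg (hf.1 x hL.1) (mul_nonneg (sub_nonneg.2 ht.1) (hpos t ht.2))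

/-- Interpolating `f / ∏ (r - t)` at `L` and multiplying back by `∏ (r - t)` keeps the sign of the
interpolant under control beyond `S`. -/
theorem exists_indicator_interpolant {L R : Multiset 𝕜} (hf : HasNonnegDivDiffOn S L.card f)
    (hL : ∀ a ∈ L, a ∈ S) (hR : ∀ r ∈ R, ∀ t ∈ S, t < r) :
    ∃ H : 𝕜[X], H.degree < (L.card + R.card : ℕ) ∧
      (∀ y ∈ L + R, H.eval y = S.indicator f y) ∧
      (∀ t ∈ S, ∃ e, 0 ≤ e ∧ f t - H.eval t = (L.map (t - ·)).prod * e) ∧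
      ∀ t, (∀ a ∈ L, a ≤ t) → ∃ e, 0 ≤ e ∧ H.eval t = (R.map (· - t)).prod * e := by
  obtain ⟨h, hdeg, hrem, hpos⟩ := (hf.mul (inv_prod_sub hR)).exists_hermite_interpolant hL
  set q : 𝕜[X] := (R.map (C · - X)).prod
  have hq_eval (t : 𝕜) : q.eval t = (R.map (· - t)).prod := eval_multiset_prod_C_sub_X R t
  have hrem' : ∀ t ∈ S, ∃ e, 0 ≤ e ∧ f t - (h * q).eval t = (L.map (t - ·)).prod * e := by
    intro t ht
    obtain ⟨e, he, hfe⟩ := hrem t ht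
    have hq_pos : 0 < q.eval t := by
      rw [hq_eval]
      exact Multiset.prod_pos (by simpa using fun r hr => hR r hr t ht)
    refine ⟨e * q.eval t, mul_nonneg he hq_pos.le, ?_⟩
    rw [← hq_eval] at hfe
    rw [eval_mul, ← mul_assoc, ← hfe, sub_mul, inv_mul_cancel_right₀ hq_pos.ne']
  have hval (t : 𝕜) (ht : ∀ a ∈ L, a ≤ t) :
      ∃ e, 0 ≤ e ∧ (h * q).eval t = (R.map (· - t)).prod * e :=
    ⟨h.eval t, hpos t ht, by rw [eval_mul, hq_eval, mul_comm]⟩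
  refine ⟨h * q, ?_, fun y hy => ?_, hrem', hval⟩
  · rw [degree_mul, Nat.cast_add, degree_multiset_prod_C_sub_X]
    exact WithBot.add_lt_add_right (WithBot.natCast_ne_bot _) hdeg
  · rcases Multiset.mem_add.1 hy with hyL | hyR
    · obtain ⟨e, -, hfe⟩ := hrem' y (hL y hyL)
      have hzero : (L.map (y - ·)).prod = 0 :=
        Multiset.prod_eq_zero (Multiset.mem_map.2 ⟨y, hyL, sub_self y⟩)
      rw [Set.indicator_of_mem (hL y hyL)]
      linear_combination -hfe - e * hzero
    · obtain ⟨e, -, hye⟩ := hval y fun a ha => (hR y hyR a (hL a ha)).le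
      have hzero : (R.map (· - y)).prod = 0 :=
        Multiset.prod_eq_zero (Multiset.mem_map.2 ⟨y, hyR, sub_self y⟩)
      rw [Set.indicator_of_notMem fun hyS => (hR y hyR y hyS).false, hye, hzero, zero_mul]

section OneSided

variable {A B D : Multiset 𝕜} {c : 𝕜}

theorem exists_interpolant_le_indicator_Iio
    (hf : HasNonnegDivDiffOn (Set.Iio c) (2 * A.card) f)
    (hA : ∀ a ∈ A, a < c) (hB : ∀ b ∈ B, c < b) (hD : ∀ d ∈ D, c < d) :
    ∃ H : 𝕜[X], H.degree < (2 * A.card + 1 + 2 * B.card + D.card : ℕ) ∧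
      (∀ y ∈ A + {c} + B + D, H.eval y = (Set.Iio c).indicator f y) ∧
      ∀ t, (∀ d ∈ D, t ≤ d) → H.eval t ≤ (Set.Iio c).indicator f t := by
  have hR : ∀ r ∈ {c} + 2 • B + D, ∀ t ∈ Set.Iio c, t < r := by
    have hc : ∀ r ∈ {c} + 2 • B + D, c ≤ r := by
      simpa [or_imp, forall_and] using ⟨fun b hb => (hB b hb).le, fun d hd => (hD d hd).le⟩
    exact fun r hr t ht => ht.trans_le (hc r hr)
  obtain ⟨H, hdeg, hnode, hbelow, habove⟩ :=
    exists_indicator_interpolant (L := 2 • A) (by simpa using hf) (by simpa using hA) hR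
  refine ⟨H, by simpa [add_assoc, add_comm, add_left_comm] using hdeg,
    fun y hy => hnode y (by simpa [or_assoc, or_left_comm] using hy), fun t ht => ?_⟩
  rcases lt_or_ge t c with htc | hct
  · obtain ⟨e, he, hfe⟩ := hbelow t htc
    rw [Set.indicator_of_mem (Set.mem_Iio.2 htc), ← sub_nonneg, hfe, Multiset.map_nsmul,
      Multiset.prod_nsmul]
    positivity
  · obtain ⟨e, he, hHe⟩ := habove t (by simpa using fun a ha => ((hA a ha).trans_le hct).le)
    have hD_nonneg : 0 ≤ (D.map (· - t)).prod :=
      Multiset.prod_map_nonneg fun d hd => sub_nonneg.2 (ht d hd)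
    rw [Set.indicator_of_notMem (Set.notMem_Iio.2 hct), hHe]
    simp only [Multiset.map_add, Multiset.prod_add, Multiset.map_nsmul, Multiset.prod_nsmul,
      Multiset.map_singleton, Multiset.prod_singleton, mul_assoc]
    exact mul_nonpos_of_nonpos_of_nonneg (sub_nonpos.2 hct) (by positivity)

theorem exists_indicator_Iic_le_interpolant
    (hf : HasNonnegDivDiffOn (Set.Iic c) (2 * A.card + 1) f)
    (hA : ∀ a ∈ A, a < c) (hB : ∀ b ∈ B, c < b) (hD : ∀ d ∈ D, c < d) :
    ∃ H : 𝕜[X], H.degree < (2 * A.card + 1 + 2 * B.card + D.card : ℕ) ∧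
      (∀ y ∈ A + {c} + B + D, H.eval y = (Set.Iic c).indicator f y) ∧
      ∀ t, (∀ d ∈ D, t ≤ d) → (Set.Iic c).indicator f t ≤ H.eval t := by
  have hL : ∀ a ∈ 2 • A + {c}, a ≤ c := by
    simpa [or_imp, forall_and] using fun a ha => (hA a ha).le
  have hR : ∀ r ∈ 2 • B + D, ∀ t ∈ Set.Iic c, t < r := by
    have hc : ∀ r ∈ 2 • B + D, c < r := by simpa [or_imp, forall_and] using ⟨hB, hD⟩
    exact fun r hr t ht => ht.trans_lt (hc r hr)
  obtain ⟨H, hdeg, hnode, hbelow, habove⟩ :=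
    exists_indicator_interpolant (S := Set.Iic c) (by simpa using hf) hL hR
  refine ⟨H, by simpa [add_assoc] using hdeg,
    fun y hy => hnode y (by simpa [or_assoc] using hy), fun t ht => ?_⟩
  rcases le_or_gt t c with htc | hct
  · obtain ⟨e, he, hfe⟩ := hbelow t htc
    rw [Set.indicator_of_mem (Set.mem_Iic.2 htc), ← sub_nonpos, hfe, Multiset.map_add,
      Multiset.prod_add, Multiset.map_nsmul, Multiset.prod_nsmul, Multiset.map_singleton,
      Multiset.prod_singleton, mul_right_comm]
    exact mul_nonpos_of_nonneg_of_nonpos (by positivity) (sub_nonpos.2 htc)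
  · obtain ⟨e, he, hHe⟩ := habove t fun a ha => (hL a ha).trans hct.le
    have hD_nonneg : 0 ≤ (D.map (· - t)).prod :=
      Multiset.prod_map_nonneg fun d hd => sub_nonneg.2 (ht d hd)
    rw [Set.indicator_of_notMem (Set.notMem_Iic.2 hct), hHe, Multiset.map_add, Multiset.prod_add,
      Multiset.map_nsmul, Multiset.prod_nsmul]
    positivity

end OneSided

end HasNonnegDivDiffOn

end DividedDifferences

section Smooth

variable {F F' : ℝ → ℝ} {c x t : ℝ}

theorem hasDerivAt_integral_pow_mul_comp_segment (hF : Continuous F) (hF' : Continuous F')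
    (hderiv : ∀ u < c, HasDerivAt F (F' u) u) (hx : x ≤ c) (ht : t < c) (k : ℕ) :
    HasDerivAt (fun u => ∫ s in (0 : ℝ)..1, s ^ k * F (x + s * (u - x)))
      (∫ s in (0 : ℝ)..1, s ^ (k + 1) * F' (x + s * (t - x))) t := by
  have hcont {G : ℝ → ℝ} (hG : Continuous G) (j : ℕ) (u : ℝ) :
      Continuous fun s : ℝ => s ^ j * G (x + s * (u - x)) := by fun_prop
  have hjoint : Continuous fun p : ℝ × ℝ => p.2 ^ (k + 1) * F' (x + p.2 * (p.1 - x)) := by fun_prop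
  obtain ⟨B, hB⟩ := (isCompact_Icc.prod isCompact_Icc).exists_bound_of_continuousOn
    (s := Set.Icc (t - 1) c ×ˢ Set.Icc (0 : ℝ) 1) hjoint.continuousOn
  have hpoint : ∀ s ∈ Set.Ioc (0 : ℝ) 1, ∀ u < c, HasDerivAt
      (fun u => s ^ k * F (x + s * (u - x))) (s ^ (k + 1) * F' (x + s * (u - x))) u := by
    intro s hs u hu
    have hlt : x + s * (u - x) < c := by nlinarith [hs.1, hs.2]
    have hinner : HasDerivAt (fun u : ℝ => x + s * (u - x)) (s * 1) u :=
      (((hasDerivAt_id u).sub_const x).const_mul s).const_add x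
    exact (((hderiv _ hlt).comp u hinner).const_mul (s ^ k)).congr_deriv (by ring)
  refine (intervalIntegral.hasDerivAt_integral_of_dominated_loc_of_deriv_le
    (F' := fun u s => s ^ (k + 1) * F' (x + s * (u - x)))
    (s := Set.Ioo (t - 1) c) (bound := fun _ => B) (Ioo_mem_nhds (sub_one_lt t) ht)
    (.of_forall fun u => (hcont hF k u).aestronglyMeasurable)
    ((hcont hF k t).intervalIntegrable _ _) (hcont hF' (k + 1) t).aestronglyMeasurable
    (.of_forall fun s hs u hu => ?_) intervalIntegrable_const
    (.of_forall fun s hs u hu => ?_)).2 <;> rw [Set.uIoc_of_le zero_le_one] at hs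
  · exact hB (u, s) ⟨Set.Ioo_subset_Icc_self hu, Set.Ioc_subset_Icc_self hs⟩
  · exact hpoint s hs u hu.2

theorem sub_eq_sub_mul_integral_segment (hF : Continuous F) (hF' : Continuous F')
    (hderiv : ∀ u < c, HasDerivAt F (F' u) u) (hx : x ≤ c) (ht : t ≤ c) :
    F t - F x = (t - x) * ∫ s in (0 : ℝ)..1, F' (x + s * (t - x)) := by
  rcases eq_or_ne t x with rfl | hne
  · simp
  have hpoint : ∀ s ∈ Set.Ioo (0 : ℝ) 1, HasDerivAt (fun s => F (x + s * (t - x)))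
      ((t - x) * F' (x + s * (t - x))) s := by
    intro s hs
    have hlt : x + s * (t - x) < c := by
      rcases hne.lt_or_gt with h | h
      · nlinarith [mul_pos hs.1 (sub_pos.2 h)]
      · nlinarith [mul_pos (sub_pos.2 hs.2) (sub_pos.2 h)]
    have hinner : HasDerivAt (fun s : ℝ => x + s * (t - x)) (1 * (t - x)) s :=
      ((hasDerivAt_id s).mul_const (t - x)).const_add x
    exact ((hderiv _ hlt).comp s hinner).congr_deriv (by ring)
  have hftc := intervalIntegral.integral_eq_sub_of_hasDerivAt_of_le zero_le_one
    (Continuous.continuousOn (by fun_prop)) hpoint (Continuous.intervalIntegrable (by fun_prop) _ _)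
  rw [intervalIntegral.integral_const_mul] at hftc
  simpa using hftc.symm

namespace HasNonnegDivDiffOn

theorem of_hasDerivAt {N : ℕ} {F : ℕ → ℝ → ℝ} (hcont : ∀ k ≤ N, Continuous (F k))
    (hnonneg : ∀ k ≤ N, ∀ t, 0 ≤ F k t)
    (hderiv : ∀ k < N, ∀ t < c, HasDerivAt (F k) (F (k + 1) t) t) :
    HasNonnegDivDiffOn (Set.Iic c) N (F 0) := by
  induction N generalizing F with
  | zero => exact fun t _ => hnonneg 0 le_rfl t
  | succ N ih =>
    refine ⟨fun t _ => hnonneg 0 (Nat.zero_le _) t, fun x hx => ?_⟩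
    have hslope := ih (F := fun k t => ∫ s in (0 : ℝ)..1, s ^ k * F (k + 1) (x + s * (t - x)))
      (fun k hk => ?_) (fun k hk t => ?_) fun k hk t ht => ?_
    · refine ⟨_, hslope, fun t ht => ?_⟩
      simpa using sub_eq_sub_mul_integral_segment (hcont 0 (by lia)) (hcont 1 (by lia))
        (hderiv 0 (by lia)) hx ht
    · have := hcont (k + 1) (by lia)
      exact intervalIntegral.continuous_parametric_intervalIntegral_of_continuous'
        (f := fun t s => s ^ k * F (k + 1) (x + s * (t - x))) (by fun_prop) 0 1
    · exact intervalIntegral.integral_nonneg zero_le_one fun s hs =>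
        mul_nonneg (pow_nonneg hs.1 _) (hnonneg _ (by lia) _)
    · exact hasDerivAt_integral_pow_mul_comp_segment (hcont _ (by lia)) (hcont _ (by lia))
        (hderiv (k + 1) (by lia)) hx ht k

theorem of_contDiffOn {N : ℕ} {g : ℝ → ℝ} (hg : ContDiffOn ℝ N g (Set.Iic c))
    (hder : ∀ k ≤ N, ∀ t < c, 0 ≤ iteratedDerivWithin k g (Set.Iic c) t) :
    HasNonnegDivDiffOn (Set.Iic c) N g := by
  have hunique := uniqueDiffOn_Iic c
  have hcont : ∀ k ≤ N, ContinuousOn (iteratedDerivWithin k g (Set.Iic c)) (Set.Iic c) :=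
    fun k hk => hg.continuousOn_iteratedDerivWithin (by exact_mod_cast hk) hunique
  have hnonneg : ∀ k ≤ N, ∀ t ∈ Set.Iic c, 0 ≤ iteratedDerivWithin k g (Set.Iic c) t := by
    intro k hk t ht
    rw [← closure_Iio] at ht
    exact le_on_closure (hder k hk) continuousOn_const (closure_Iio c ▸ hcont k hk) ht
  have hextend := of_hasDerivAt (c := c) (N := N)
    (F := fun k t => iteratedDerivWithin k g (Set.Iic c) (min t c))
    (fun k hk => (hcont k hk).comp_continuous (by fun_prop) fun t => min_le_right t c)
    (fun k hk t => hnonneg k hk _ (min_le_right t c)) fun k hk t ht => ?_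
  · exact hextend.congr fun t ht => by simp [min_eq_left (Set.mem_Iic.1 ht)]
  · have hwithin := (hg.differentiableOn_iteratedDerivWithin (by exact_mod_cast hk) hunique t
      ht.le).hasDerivWithinAt.hasDerivAt (Iic_mem_nhds ht)
    simp only [min_eq_left ht.le, iteratedDerivWithin_succ]
    refine hwithin.congr_of_eventuallyEq ?_
    filter_upwards [Iio_mem_nhds ht] with u hu
    rw [min_eq_left hu.le]

theorem integrableOn_Iic {μ : Measure ℝ} [IsFiniteMeasure μ] {N : ℕ} {g : ℝ → ℝ}
    (hg : HasNonnegDivDiffOn (Set.Iic c) (N + 1) g) (hcont : ContinuousOn g (Set.Iic c)) :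
    IntegrableOn g (Set.Iic c) μ := by
  refine .of_bound (measure_lt_top μ _) (hcont.aestronglyMeasurable measurableSet_Iic) (g c) ?_
  filter_upwards [ae_restrict_mem measurableSet_Iic] with t ht
  rw [Real.norm_of_nonneg (hg.nonneg t ht)]
  exact hg.monotoneOn ht Set.self_mem_Iic ht

end HasNonnegDivDiffOn

end Smooth

section Quadrature

open Polynomial

variable {μ : Measure ℝ}

theorem integrable_eval_of_integrable_pow (hμ : ∀ k : ℕ, Integrable (fun t : ℝ => t ^ k) μ)
    (p : ℝ[X]) : Integrable (fun t => p.eval t) μ := by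
  simp only [eval_eq_sum_range]
  exact integrable_finsetSum _ fun k _ => (hμ k).const_mul _

theorem integral_eval_mul_eq_zero_of_degree_lt (hμ : ∀ k : ℕ, Integrable (fun t : ℝ => t ^ k) μ)
    {p q : ℝ[X]} {m : ℕ} (hp : ∀ k < m, ∫ t, p.eval t * t ^ k ∂μ = 0) (hq : q.degree < m) :
    ∫ t, (p * q).eval t ∂μ = 0 := by
  have hterm (k : ℕ) : Integrable (fun t => q.coeff k * (p.eval t * t ^ k)) μ := by
    refine ((integrable_eval_of_integrable_pow hμ (p * X ^ k)).const_mul (q.coeff k)).congr ?_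
    exact .of_forall fun t => by simp
  have hsupport : q.support ⊆ Finset.range m := fun k hk => Finset.mem_range.2 <|
    Nat.cast_lt.1 ((le_degree_of_mem_supp k hk).trans_lt hq)
  have hexpand (t : ℝ) :
      (p * q).eval t = ∑ k ∈ Finset.range m, q.coeff k * (p.eval t * t ^ k) := by
    rw [eval_mul, eval_eq_sum (p := q), sum_eq_of_subset _ (by simp) hsupport, Finset.mul_sum]
    exact Finset.sum_congr rfl fun k _ => mul_left_comm _ _ _
  simp only [hexpand]
  rw [integral_finsetSum _ fun k _ => hterm k]
  refine Finset.sum_eq_zero fun k hk => ?_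
  rw [integral_const_mul, hp k (Finset.mem_range.1 hk), mul_zero]

variable {ι : Type*} [DecidableEq ι] {s : Finset ι} {v : ι → ℝ} {m : ℕ} {H : ℝ[X]} {φ : ℝ → ℝ}

/-- The weight at the node `v i` of the interpolatory quadrature rule for `μ` with nodes `v j`,
`j ∈ s`; the weights `qweight ad μ i` are the case `s = Finset.univ`, `v = ad.x`. -/
noncomputable def lagrangeWeight (μ : Measure ℝ) (s : Finset ι) (v : ι → ℝ) (i : ι) : ℝ :=
  ∫ t, (Lagrange.basis s v i).eval t ∂μ

theorem integral_eval_eq_sum_of_degree_lt_card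
    (hμ : ∀ k : ℕ, Integrable (fun t : ℝ => t ^ k) μ) (hv : Set.InjOn v s)
    (hH : H.degree < s.card) :
    ∫ t, H.eval t ∂μ = ∑ i ∈ s, lagrangeWeight μ s v i * H.eval (v i) := by
  conv_lhs => rw [Lagrange.eq_interpolate hv hH]
  simp only [Lagrange.interpolate_apply, eval_finsetSum, eval_mul, eval_C]
  rw [integral_finsetSum _ fun i _ => (integrable_eval_of_integrable_pow hμ _).const_mul _]
  exact Finset.sum_congr rfl fun i _ => by rw [integral_const_mul, mul_comm, lagrangeWeight]

theorem integral_eval_eq_sum_of_degree_lt_card_add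
    (hμ : ∀ k : ℕ, Integrable (fun t : ℝ => t ^ k) μ) (hv : Set.InjOn v s)
    (horth : ∀ k < m, ∫ t, (∏ i ∈ s, (t - v i)) * t ^ k ∂μ = 0)
    (hH : H.degree < (s.card + m : ℕ)) :
    ∫ t, H.eval t ∂μ = ∑ i ∈ s, lagrangeWeight μ s v i * H.eval (v i) := by
  set P := Lagrange.nodal s v with hP
  have hPmonic : P.Monic := Lagrange.nodal_monic
  have hquot : (H /ₘ P).degree < m := by
    rcases lt_or_ge H.degree P.degree with hlt | hle
    · rw [(divByMonic_eq_zero_iff hPmonic).2 hlt, degree_zero]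
      exact WithBot.bot_lt_coe m
    · rw [← degree_add_divByMonic hPmonic hle, hP, Lagrange.degree_nodal, Nat.cast_add] at hH
      exact lt_of_add_lt_add_left hH
  have hrem : (H %ₘ P).degree < s.card :=
    (degree_modByMonic_lt H hPmonic).trans_eq Lagrange.degree_nodal
  have hnode : ∀ i ∈ s, (H %ₘ P).eval (v i) = H.eval (v i) := fun i hi => by
    rw [modByMonic_eq_sub_mul_div, eval_sub, eval_mul, hP, Lagrange.eval_nodal_at_node hi,
      zero_mul, sub_zero]
  calc ∫ t, H.eval t ∂μ
      = ∫ t, ((H %ₘ P).eval t + (P * (H /ₘ P)).eval t) ∂μ := by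
        simp only [← eval_add, modByMonic_add_div]
    _ = ∫ t, (H %ₘ P).eval t ∂μ := by
        rw [integral_add (integrable_eval_of_integrable_pow hμ _)
          (integrable_eval_of_integrable_pow hμ _), integral_eval_mul_eq_zero_of_degree_lt hμ
          (by simpa only [hP, Lagrange.eval_nodal] using horth) hquot, add_zero]
    _ = ∑ i ∈ s, lagrangeWeight μ s v i * H.eval (v i) := by
        rw [integral_eval_eq_sum_of_degree_lt_card hμ hv hrem]
        exact Finset.sum_congr rfl fun i hi => by rw [hnode i hi]

theorem sum_lagrangeWeight_mul_le_integral
    (hμ : ∀ k : ℕ, Integrable (fun t : ℝ => t ^ k) μ) (hv : Set.InjOn v s)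
    (horth : ∀ k < m, ∫ t, (∏ i ∈ s, (t - v i)) * t ^ k ∂μ = 0)
    (hH : H.degree < (s.card + m : ℕ)) (hφ : Integrable φ μ)
    (hnode : ∀ i ∈ s, H.eval (v i) = φ (v i)) (hle : ∀ᵐ t ∂μ, H.eval t ≤ φ t) :
    ∑ i ∈ s, lagrangeWeight μ s v i * φ (v i) ≤ ∫ t, φ t ∂μ := by
  rw [← Finset.sum_congr rfl fun i hi => congrArg _ (hnode i hi),
    ← integral_eval_eq_sum_of_degree_lt_card_add hμ hv horth hH]
  exact integral_mono_ae (integrable_eval_of_integrable_pow hμ H) hφ hle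

theorem integral_le_sum_lagrangeWeight_mul
    (hμ : ∀ k : ℕ, Integrable (fun t : ℝ => t ^ k) μ) (hv : Set.InjOn v s)
    (horth : ∀ k < m, ∫ t, (∏ i ∈ s, (t - v i)) * t ^ k ∂μ = 0)
    (hH : H.degree < (s.card + m : ℕ)) (hφ : Integrable φ μ)
    (hnode : ∀ i ∈ s, H.eval (v i) = φ (v i)) (hge : ∀ᵐ t ∂μ, φ t ≤ H.eval t) :
    ∫ t, φ t ∂μ ≤ ∑ i ∈ s, lagrangeWeight μ s v i * φ (v i) := by
  rw [← Finset.sum_congr rfl fun i hi => congrArg _ (hnode i hi),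
    ← integral_eval_eq_sum_of_degree_lt_card_add hμ hv horth hH]
  exact integral_mono_ae hφ (integrable_eval_of_integrable_pow hμ H) hge

end Quadrature

section IncreasingNodes

variable {N n : ℕ} {x : Fin N → ℝ} {ℓ : Fin N} {μ : Measure ℝ} {g : ℝ → ℝ}

theorem exists_multiset_partition_of_strictMono (hx : StrictMono x) (hℓ : (ℓ : ℕ) < n) :
    ∃ A B D : Multiset ℝ, A.card = ℓ ∧ 2 * A.card + 1 + 2 * B.card + D.card ≤ N + n ∧
      (∀ a ∈ A, a < x ℓ) ∧ (∀ b ∈ B, x ℓ < b) ∧ (∀ d ∈ D, x ℓ < d) ∧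
      (∀ d ∈ D, ∃ i : Fin N, n ≤ i ∧ x i = d) ∧ ∀ i, x i ∈ A + {x ℓ} + B + D := by
  let b : Finset (Fin N) := {i ∈ Finset.Ioi ℓ | ↑i < n}
  let d : Finset (Fin N) := {i ∈ Finset.Ioi ℓ | ¬ ↑i < n}
  have hcard_add : b.card + d.card = N - 1 - ℓ := by
    rw [Finset.card_filter_add_card_filter_not, Fin.card_Ioi]
  have hcard_b : b.card ≤ n - ℓ - 1 := by
    rw [← Nat.card_Ioo]
    exact Finset.card_le_card_of_injOn (↑·) (by simp [b, Set.MapsTo]) Fin.val_injective.injOn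
  refine ⟨(Finset.Iio ℓ).val.map x, b.val.map x, d.val.map x, by simp, ?_, ?_, ?_, ?_, ?_, ?_⟩
  · simp only [Multiset.card_map, Finset.card_val, Fin.card_Iio]
    lia
  all_goals simp only [Multiset.mem_add, Multiset.mem_map, Multiset.mem_singleton, Finset.mem_val,
    Finset.mem_Iio, Finset.mem_Ioi, Finset.mem_filter, not_lt, b, d]
  · rintro _ ⟨i, hi, rfl⟩
    exact hx hi
  · rintro _ ⟨i, hi, rfl⟩
    exact hx hi.1
  · rintro _ ⟨i, hi, rfl⟩
    exact hx hi.1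
  · exact fun _ ⟨i, hi, hxi⟩ => ⟨i, hi.2, hxi⟩
  · grind

theorem sum_Iio_lagrangeWeight_mul_le_setIntegral
    (hμ : ∀ k : ℕ, Integrable (fun t : ℝ => t ^ k) μ) (hx : StrictMono x)
    (hsupp : ∀ᵐ t ∂μ, ∀ i : Fin N, n ≤ i → t ≤ x i)
    (horth : ∀ k < n, ∫ t, (∏ i, (t - x i)) * t ^ k ∂μ = 0) (hℓ : (ℓ : ℕ) < n)
    (hg : HasNonnegDivDiffOn (Set.Iio (x ℓ)) (2 * ℓ) g) (hint : IntegrableOn g (Set.Iio (x ℓ)) μ) :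
    ∑ i ∈ Finset.Iio ℓ, lagrangeWeight μ Finset.univ x i * g (x i) ≤
      ∫ t in Set.Iio (x ℓ), g t ∂μ := by
  obtain ⟨A, B, D, hcard, hcard_le, hA, hB, hD, hD_node, hnodes⟩ :=
    exists_multiset_partition_of_strictMono hx hℓ
  obtain ⟨H, hdeg, hH, hle⟩ :=
    HasNonnegDivDiffOn.exists_interpolant_le_indicator_Iio (hcard ▸ hg) hA hB hD
  have hle_ae : ∀ᵐ t ∂μ, H.eval t ≤ (Set.Iio (x ℓ)).indicator g t := by
    filter_upwards [hsupp] with t ht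
    refine hle t fun d hd => ?_
    obtain ⟨i, hi, rfl⟩ := hD_node d hd
    exact ht i hi
  have hquad := sum_lagrangeWeight_mul_le_integral hμ hx.injective.injOn horth
    (hdeg.trans_le (by simpa using mod_cast hcard_le)) (hint.integrable_indicator measurableSet_Iio)
    (fun i _ => hH (x i) (hnodes i)) hle_ae
  rw [integral_indicator measurableSet_Iio] at hquad
  simpa only [Set.indicator_apply, Set.mem_Iio, hx.lt_iff_lt, mul_ite, mul_zero,
    ← Finset.sum_filter, Finset.filter_gt_eq_Iio] using hquad

theorem setIntegral_le_sum_Iic_lagrangeWeight_mul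
    (hμ : ∀ k : ℕ, Integrable (fun t : ℝ => t ^ k) μ) (hx : StrictMono x)
    (hsupp : ∀ᵐ t ∂μ, ∀ i : Fin N, n ≤ i → t ≤ x i)
    (horth : ∀ k < n, ∫ t, (∏ i, (t - x i)) * t ^ k ∂μ = 0) (hℓ : (ℓ : ℕ) < n)
    (hg : HasNonnegDivDiffOn (Set.Iic (x ℓ)) (2 * ℓ + 1) g)
    (hint : IntegrableOn g (Set.Iic (x ℓ)) μ) :
    ∫ t in Set.Iic (x ℓ), g t ∂μ ≤
      ∑ i ∈ Finset.Iic ℓ, lagrangeWeight μ Finset.univ x i * g (x i) := by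
  obtain ⟨A, B, D, hcard, hcard_le, hA, hB, hD, hD_node, hnodes⟩ :=
    exists_multiset_partition_of_strictMono hx hℓ
  obtain ⟨H, hdeg, hH, hge⟩ :=
    HasNonnegDivDiffOn.exists_indicator_Iic_le_interpolant (hcard ▸ hg) hA hB hD
  have hge_ae : ∀ᵐ t ∂μ, (Set.Iic (x ℓ)).indicator g t ≤ H.eval t := by
    filter_upwards [hsupp] with t ht
    refine hge t fun d hd => ?_
    obtain ⟨i, hi, rfl⟩ := hD_node d hd
    exact ht i hi
  have hquad := integral_le_sum_lagrangeWeight_mul hμ hx.injective.injOn horth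
    (hdeg.trans_le (by simpa using mod_cast hcard_le)) (hint.integrable_indicator measurableSet_Iic)
    (fun i _ => hH (x i) (hnodes i)) hge_ae
  rw [integral_indicator measurableSet_Iic] at hquad
  simpa only [Set.indicator_apply, Set.mem_Iic, hx.le_iff_le, mul_ite, mul_zero,
    ← Finset.sum_filter, Finset.filter_ge_eq_Iic] using hquad

theorem angelesco_PCMS_inequalities_general
    (hμ : ∀ k : ℕ, Integrable (fun t : ℝ => t ^ k) μ) (hx : StrictMono x)
    (hsupp : ∀ᵐ t ∂μ, ∀ i : Fin N, n ≤ i → t ≤ x i)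
    (horth : ∀ k < n, ∫ t, (∏ i, (t - x i)) * t ^ k ∂μ = 0) (hℓ : (ℓ : ℕ) < n)
    (hg : ContDiffOn ℝ (2 * ℓ + 1 : ℕ) g (Set.Iic (x ℓ)))
    (hder : ∀ k ≤ 2 * (ℓ : ℕ) + 1, ∀ t < x ℓ, 0 ≤ iteratedDerivWithin k g (Set.Iic (x ℓ)) t) :
    ∑ i ∈ Finset.Iio ℓ, lagrangeWeight μ Finset.univ x i * g (x i) ≤
        ∫ t in Set.Iio (x ℓ), g t ∂μ ∧
      ∫ t in Set.Iic (x ℓ), g t ∂μ ≤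
        ∑ i ∈ Finset.Iic ℓ, lagrangeWeight μ Finset.univ x i * g (x i) := by
  have hdivDiff := HasNonnegDivDiffOn.of_contDiffOn hg hder
  have hfinite : IsFiniteMeasure μ := by simpa [integrable_const_iff] using hμ 0
  have hint : IntegrableOn g (Set.Iic (x ℓ)) μ :=
    hdivDiff.integrableOn_Iic hg.continuousOn
  exact ⟨sum_Iio_lagrangeWeight_mul_le_setIntegral hμ hx hsupp horth hℓ
      (hdivDiff.of_succ.mono Set.Iio_subset_Iic_self) (hint.mono_set Set.Iio_subset_Iic_self),
    setIntegral_le_sum_Iic_lagrangeWeight_mul hμ hx hsupp horth hℓ hdivDiff hint⟩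

end IncreasingNodes

/-- **Possé–Chebyshev–Markov–Stieltjes inequalities for the positive weights.**
Let `1 ≤ ℓ ≤ n` and let `g : (−∞, x_{ℓ,2n}] → [0,∞)` have `2n` continuous derivatives
there with `g⁽ᵏ⁾ ≥ 0` for `0 ≤ k ≤ 2n`.  Then
`∑_{k=1}^{ℓ−1} λ_{k,2n}^{(1)} g(x_{k,2n}) ≤ ∫_{[a₁,x_{ℓ,2n})} g dμ₁` and
`∫_{[a₁,x_{ℓ,2n}]} g dμ₁ ≤ ∑_{k=1}^{ℓ} λ_{k,2n}^{(1)} g(x_{k,2n})`. -/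
theorem angelesco_PCMS_inequalities
    (μ₁ μ₂ : Measure ℝ) [IsFiniteMeasure μ₁] [IsFiniteMeasure μ₂]
    (a₁ b₁ a₂ b₂ : ℝ) (hab₁ : a₁ < b₁) (hgap : b₁ ≤ a₂) (hab₂ : a₂ < b₂)
    (hsupp₁ : μ₁ (Set.Icc a₁ b₁)ᶜ = 0) (hsupp₂ : μ₂ (Set.Icc a₂ b₂)ᶜ = 0)
    (hinf₁ : ∀ s : Finset ℝ, μ₁ ((s : Set ℝ))ᶜ ≠ 0)
    (hinf₂ : ∀ s : Finset ℝ, μ₂ ((s : Set ℝ))ᶜ ≠ 0)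
    (hmom₁ : ∀ k : ℕ, Integrable (fun t : ℝ => t ^ k) μ₁)
    (hmom₂ : ∀ k : ℕ, Integrable (fun t : ℝ => t ^ k) μ₂)
    (n : ℕ) (hn : 1 ≤ n) (ad : Angelesco μ₁ μ₂ a₁ b₁ a₂ b₂ n)
    (ℓ : ℕ) (hℓ₁ : 1 ≤ ℓ) (hℓ₂ : ℓ ≤ n)
    (g : ℝ → ℝ)
    (hsmooth : ContDiffOn ℝ (2 * n) g (Set.Iic (ad.x ⟨ℓ - 1, by omega⟩)))
    (hgnonneg : ∀ t ∈ Set.Iic (ad.x ⟨ℓ - 1, by omega⟩), 0 ≤ g t)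
    (hgder : ∀ k ≤ 2 * n, ∀ t < ad.x ⟨ℓ - 1, by omega⟩,
      0 ≤ iteratedDerivWithin k g (Set.Iic (ad.x ⟨ℓ - 1, by omega⟩)) t) :
    (∑ i ∈ Finset.univ.filter (fun i : Fin (2 * n) => (i : ℕ) < ℓ - 1),
        qweight ad μ₁ i * g (ad.x i))
      ≤ (∫ t in Set.Ico a₁ (ad.x ⟨ℓ - 1, by omega⟩), g t ∂μ₁) ∧
    (∫ t in Set.Icc a₁ (ad.x ⟨ℓ - 1, by omega⟩), g t ∂μ₁)
      ≤ ∑ i ∈ Finset.univ.filter (fun i : Fin (2 * n) => (i : ℕ) < ℓ),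
          qweight ad μ₁ i * g (ad.x i) := by
  have hmem : ∀ᵐ t ∂μ₁, t ∈ Set.Icc a₁ b₁ := hsupp₁
  have hIci : Set.Ici a₁ =ᵐ[μ₁] Set.univ := Filter.eventuallyEq_univ.2 (hmem.mono fun t ht => ht.1)
  have hle_nodes : ∀ᵐ t ∂μ₁, ∀ i : Fin (2 * n), n ≤ i → t ≤ ad.x i :=
    hmem.mono fun t ht i hi => (ht.2.trans hgap).trans (ad.mem2 i hi).1.le
  have hIio : ({i | (i : ℕ) < ℓ - 1} : Finset (Fin (2 * n))) = Finset.Iio ⟨ℓ - 1, by lia⟩ := by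
    ext; simp [Fin.lt_def]
  have hIic : ({i | (i : ℕ) < ℓ} : Finset (Fin (2 * n))) = Finset.Iic ⟨ℓ - 1, by lia⟩ := by
    ext; simp [Fin.le_def]; lia
  rw [← Set.Ici_inter_Iio, ← Set.Ici_inter_Iic, hIio, hIic,
    setIntegral_congr_set (inter_ae_eq_right_of_ae_eq_univ hIci),
    setIntegral_congr_set (inter_ae_eq_right_of_ae_eq_univ hIci)]
  exact angelesco_PCMS_inequalities_general hmom₁ ad.mono hle_nodes ad.orth1 (by grind)
    (hsmooth.of_le (by norm_cast; grind)) fun k hk => hgder k (by grind)
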